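/- Let D ⊆ ℝⁿ, let f : ℝⁿ → ℝ be defined on D, and let μ : ℕ → ℕ be a uniform modulus of continuity of f on D. Let δ > 0 be rational, let p ∈ ℕ satisfy 2^{-p} ≤ δ/4, let x ∈ D, and let ỹ ∈ ℝ satisfy |ỹ − f(x)| ≤ δ/4. Then: (i) if ỹ ≥ −δ/2, then f(x) ≥ −δ (the δ-weakened constraint f(x) ≥ −δ holds at x); and (ii) if ỹ < −δ/2, then f(x) < 0 and moreover f(z) < 0 for every z ∈ D with ‖z − x‖ ≤ 2^{-μ(p)} (so the clause excluding the ball B(x, 2^{-μ(p)}) is a valid linearisation of the constraint f(x) ≥ 0 on D). -/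

import Mathlib

/-- Correctness of the full-box linearisation step: with a uniform modulus of
continuity `μ` of `f` on `D`, a precision `p` with `2^{-p} ≤ δ/4`, and an
approximation `ỹ` of `f(x)` accurate to `δ/4`: if `ỹ ≥ -δ/2` then the δ-weakening
`f(x) ≥ -δ` holds; if `ỹ < -δ/2` then `f(x) < 0`, and `f(z) < 0` for every
`z ∈ D` with `‖z - x‖ ≤ 2^{-μ(p)}`. -/
theorem linearise_correct (n : ℕ) (D : Set (Fin n → ℝ)) (f : (Fin n → ℝ) → ℝ)
    (μ : ℕ → ℕ)
    (hμ : ∀ k : ℕ, ∀ y ∈ D, ∀ z ∈ D,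
      ‖y - z‖ ≤ ((2 : ℝ) ^ (μ k))⁻¹ → |f y - f z| ≤ ((2 : ℝ) ^ k)⁻¹)
    (δ : ℚ) (hδ : 0 < δ) (p : ℕ) (hp : ((2 : ℝ) ^ p)⁻¹ ≤ (δ : ℝ) / 4)
    (x : Fin n → ℝ) (hx : x ∈ D) (ytil : ℝ) (hy : |ytil - f x| ≤ (δ : ℝ) / 4) :
    (-(δ : ℝ) / 2 ≤ ytil → -(δ : ℝ) ≤ f x) ∧
    (ytil < -(δ : ℝ) / 2 →
      f x < 0 ∧ ∀ z ∈ D, ‖z - x‖ ≤ ((2 : ℝ) ^ (μ p))⁻¹ → f z < 0) := by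
  have hd : (0 : ℝ) < (δ : ℝ) := by exact_mod_cast hδ
  obtain ⟨h1, h2⟩ := abs_le.mp hy
  refine ⟨fun h => by linarith, fun h => ⟨by linarith, fun z hz hzx => ?_⟩⟩
  obtain ⟨h3, h4⟩ := abs_le.mp (hμ p z hz x hx hzx)
  linarith
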